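/- Let 1 ≤ p < ∞ and let ρ be an admissible weight function on ℝ. If the translation semigroup (T_t)_{t≥0} is frequently hypercyclic on L_p^ρ(ℝ), then the backward shift operator B, (Bx)_k = x_{k+1}, is frequently hypercyclic on ℓ_p^v, where v_k = ρ(k) for all k ∈ ℤ. -/

import Mathlib

open Filter MeasureTheory

/-- An admissible weight function on ℝ. -/
def Admissible (ρ : ℝ → ℝ) : Prop :=
  Measurable ρ ∧ (∀ x, 0 < ρ x) ∧
    ∃ M : ℝ, 1 ≤ M ∧ ∃ ω : ℝ, ∀ τ : ℝ, ∀ t : ℝ, 0 < t →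
      ρ τ ≤ M * Real.exp (ω * t) * ρ (τ + t)

/-- The lower density of a set `A ⊆ ℕ`. -/
noncomputable def ldens (A : Set ℕ) : ℝ :=
  atTop.liminf fun N : ℕ => ((A ∩ Set.Iic N).ncard : ℝ) / (N : ℝ)

/-- The lower density of a measurable set `M ⊆ [0,∞)`. -/
noncomputable def ldensR (M : Set ℝ) : ℝ :=
  atTop.liminf fun N : ℝ => (volume (M ∩ Set.Icc 0 N)).toReal / N

/-- Membership in `L_p^ρ(ℝ)`. -/
def MemLpRho (p : ℝ) (ρ : ℝ → ℝ) (f : ℝ → ℝ) : Prop :=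
  Measurable f ∧ (∫⁻ x : ℝ, ENNReal.ofReal (|f x| ^ p * ρ x)) < ⊤

/-- Frequent hypercyclicity of the translation semigroup `(T_t f)(x) = f(x+t)` on `L_p^ρ(ℝ)`. -/
def FHTransLp (p : ℝ) (ρ : ℝ → ℝ) : Prop :=
  ∃ f : ℝ → ℝ, MemLpRho p ρ f ∧ ∀ g : ℝ → ℝ, MemLpRho p ρ g → ∀ ε : ℝ, 0 < ε →
    0 < ldensR {t : ℝ | 0 ≤ t ∧
      (∫⁻ x : ℝ, ENNReal.ofReal (|f (x + t) - g x| ^ p * ρ x)) ≤ ENNReal.ofReal (ε ^ p)}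

/-- Membership in `ℓ_p^v`. -/
def Memlpv (p : ℝ) (v : ℤ → ℝ) (x : ℤ → ℝ) : Prop :=
  Summable fun k : ℤ => |x k| ^ p * v k

/-- Frequent hypercyclicity of the backward shift `(Bx)_k = x_{k+1}` on `ℓ_p^v`. -/
def FHBackwardShift (p : ℝ) (v : ℤ → ℝ) : Prop :=
  ∃ x : ℤ → ℝ, Memlpv p v x ∧ ∀ y : ℤ → ℝ, Memlpv p v y → ∀ ε : ℝ, 0 < ε →
    0 < ldens {n : ℕ | ∑' k : ℤ, |x (k + (n : ℤ)) - y k| ^ p * v k ≤ ε ^ p}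

/-! Let `f` be frequently hypercyclic for the translation semigroup. The frequently hypercyclic
sequence for `B` is `x k = ∫ f` over the cell `[k + θ_k, k + θ_k + 1]`, where the phases
`θ_k ∈ [0, 1]` are constant on dyadic blocks `[2 ^ b, 2 ^ (b + 1))`.

By Jensen's inequality and admissibility, taking integrals over unit cells is bounded from `L_p^ρ`
to `ℓ_p^v`, uniformly in the phases (`sampling_bound`). A finitely supported rational sequence `y`
is encoded in `L_p^ρ` by a train of bumps of integral `y l` and small half-width `δ`, one near each
integer (`bumpTrain`). When `T_t f` is close to this train and `t` stays at distance at least `δ`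
from `θ + ℤ`, no bump is cut by the cells of phase `θ`, so the cell integrals read off `y` exactly,
up to an error controlled by `sampling_bound` (`visit_bound`). Hence `B ^ n x` is close to `y` for
some integer `n` within distance `2` of `t`.

The visit times `t` could all have a phase that is bad for a fixed `θ`, so `θ` is chosen separately
on each block, depending on `f`. Averaging over `θ ∈ [0, 1]`, the proportion of visits to the
`j`-th target that are bad for `θ` is at most `6 * δ_j`. With `∑ 12 * δ_j < 1`, Markov's inequality
gives one `θ` which is good for at least half of the visits in the block to each of the countably
many targets (`exists_phase`). Visits too close to the ends of a block are lost, but there are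
boundedly many per block, hence logarithmically many in total, and positive lower density survives
(`block_count`, `ldens_pos`). -/

/-! ### Lower densities -/

/-- If `H` is, on every dyadic block, at least a quarter as numerous as `A` up to a bounded loss `L`,
and `A` has linearly many elements below `2 ^ b`, then `H` has positive lower density: the
accumulated loss below `2 ^ b` is only `L * b`. -/
theorem ldens_pos {A H : Set ℕ} {L : ℕ} {c : ℝ} (hc : 0 < c)
    (hb : ∀ b : ℕ, (A ∩ Set.Ico (2 ^ b) (2 ^ (b + 1))).ncard ≤
      4 * (H ∩ Set.Ico (2 ^ b) (2 ^ (b + 1))).ncard + L)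
    (hA : ∀ᶠ b : ℕ in atTop, c * 2 ^ b ≤ ((A ∩ Set.Iio (2 ^ b)).ncard : ℝ) + 1) :
    0 < ldens H := by
  have key : ∀ b : ℕ, (A ∩ Set.Iio (2 ^ b)).ncard ≤
      4 * (H ∩ Set.Iio (2 ^ b)).ncard + L * b + 1 := by
    intro b
    induction b with
    | zero =>
      have : (A ∩ Set.Iio (2 ^ 0)) ⊆ {0} := by
        intro x hx
        have := hx.2
        simp at this
        simp [this]
      have := Set.ncard_le_ncard this (Set.finite_singleton 0)
      rw [Set.ncard_singleton] at this
      omega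
    | succ b ih =>
      have hle : (2:ℕ) ^ b ≤ 2 ^ (b + 1) := Nat.pow_le_pow_right (by norm_num) (by omega)
      have split : ∀ S : Set ℕ, (S ∩ Set.Iio (2 ^ (b + 1))).ncard =
          (S ∩ Set.Iio (2 ^ b)).ncard + (S ∩ Set.Ico (2 ^ b) (2 ^ (b + 1))).ncard := by
        intro S
        rw [← Set.ncard_union_eq _ ((Set.finite_Iio _).inter_of_right _)
          ((Set.finite_Ico _ _).inter_of_right _), ← Set.inter_union_distrib_left,
          Set.Iio_union_Ico_eq_Iio hle]
        refine Set.disjoint_left.2 fun x hx hx' => ?_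
        have h1 := hx.2
        have h2 := hx'.2.1
        simp only [Set.mem_Iio] at h1
        omega
      rw [split A, split H]
      have := hb b
      nlinarith
  have hlim : Tendsto (fun b : ℕ => ((b : ℝ) / 2 ^ b)) atTop (nhds 0) := by
    have := tendsto_pow_const_div_const_pow_of_one_lt 1 (r := (2:ℝ)) (by norm_num)
    simpa using this
  have hlim2 : Tendsto (fun b : ℕ => ((L : ℝ) * ((b : ℝ) / 2 ^ b) + 2 * (1 / 2) ^ b))
      atTop (nhds 0) := by
    have h2 : Tendsto (fun b : ℕ => ((1:ℝ) / 2) ^ b) atTop (nhds 0) :=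
      tendsto_pow_atTop_nhds_zero_of_lt_one (by norm_num) (by norm_num)
    simpa using (hlim.const_mul (L : ℝ)).add (h2.const_mul 2)
  have hsmall : ∀ᶠ b : ℕ in atTop, (L : ℝ) * b + 2 ≤ c / 2 * 2 ^ b := by
    filter_upwards [hlim2.eventually (gt_mem_nhds (show (0:ℝ) < c / 2 by positivity))] with b hb
    have h2 : (0:ℝ) < 2 ^ b := by positivity
    have := mul_le_mul_of_nonneg_right hb.le h2.le
    have e : ((L : ℝ) * ((b : ℝ) / 2 ^ b) + 2 * (1 / 2) ^ b) * 2 ^ b = L * b + 2 := by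
      rw [one_div, inv_pow]; field_simp
    linarith
  have hH : ∀ᶠ b : ℕ in atTop, c / 8 * 2 ^ b ≤ ((H ∩ Set.Iio (2 ^ b)).ncard : ℝ) := by
    filter_upwards [hA, hsmall] with b h1 h2
    have h3 : ((A ∩ Set.Iio (2 ^ b)).ncard : ℝ) ≤
      4 * (H ∩ Set.Iio (2 ^ b)).ncard + L * b + 1 := by exact_mod_cast key b
    linarith
  have hlog : Tendsto (fun N : ℕ => Nat.log 2 N) atTop atTop :=
    tendsto_atTop.2 fun b => by
      filter_upwards [eventually_ge_atTop (2 ^ b)] with N hN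
      exact Nat.le_log_of_pow_le (by norm_num) hN
  have fin : ∀ᶠ N : ℕ in atTop, c / 16 ≤ ((H ∩ Set.Iic N).ncard : ℝ) / (N : ℝ) := by
    filter_upwards [hlog.eventually hH, eventually_ge_atTop 1] with N hN hN1
    have h1 : 2 ^ Nat.log 2 N ≤ N := Nat.pow_log_le_self 2 (by omega)
    have h2 : N < 2 ^ (Nat.log 2 N + 1) := Nat.lt_pow_succ_log_self (by norm_num) N
    have h2' : (N : ℝ) ≤ 2 ^ (Nat.log 2 N) * 2 := by
      rw [← pow_succ]; exact_mod_cast h2.le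
    have h3 : ((H ∩ Set.Iio (2 ^ Nat.log 2 N)).ncard : ℝ) ≤ (H ∩ Set.Iic N).ncard := by
      refine Nat.cast_le.2 (Set.ncard_le_ncard ?_ ((Set.finite_Iic _).inter_of_right _))
      refine Set.inter_subset_inter_right _ fun x hx => ?_
      simp only [Set.mem_Iio, Set.mem_Iic] at *
      omega
    rw [le_div_iff₀ (by exact_mod_cast hN1)]
    nlinarith
  have bdd : ∀ N : ℕ, ((H ∩ Set.Iic N).ncard : ℝ) / (N : ℝ) ≤ 2 := by
    intro N
    rcases Nat.eq_zero_or_pos N with rfl | h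
    · simp
    rw [div_le_iff₀ (by exact_mod_cast h)]
    have : (H ∩ Set.Iic N).ncard ≤ (Set.Iic N).ncard :=
      Set.ncard_le_ncard Set.inter_subset_right (Set.finite_Iic _)
    rw [Set.ncard_eq_toFinset_card' (Set.Iic N)] at this
    simp at this
    have h4 : (H ∩ Set.Iic N).ncard ≤ 2 * N := by omega
    have : ((H ∩ Set.Iic N).ncard : ℝ) ≤ ((2 * N : ℕ) : ℝ) := Nat.cast_le.2 h4
    push_cast at this
    linarith
  refine lt_of_lt_of_le (show 0 < c / 16 by positivity) ?_
  exact le_liminf_of_le (isCoboundedUnder_ge_of_le atTop bdd) fin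

/-- Unfolds positivity of the real `liminf`: it is a supremum of eventual lower bounds, so one of
them is positive. -/
theorem exists_of_ldensR_pos {V : Set ℝ} (h : 0 < ldensR V) :
    ∃ c : ℝ, 0 < c ∧ ∀ᶠ N : ℝ in atTop, c ≤ (volume (V ∩ Set.Icc 0 N)).toReal / N := by
  unfold ldensR at h
  rw [Filter.liminf_eq] at h
  have hne : {a : ℝ | ∀ᶠ N : ℝ in atTop, a ≤ (volume (V ∩ Set.Icc 0 N)).toReal / N}.Nonempty := by
    refine ⟨0, ?_⟩
    filter_upwards [eventually_ge_atTop 0] with N hN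
    positivity
  obtain ⟨c, hc, hc0⟩ := exists_lt_of_lt_csSup hne h
  exact ⟨c, hc0, hc⟩

/-- The integer parts of the elements of a set of positive lower density in `[0,∞)` are linearly
many. The `+ 1` is harmless slack. -/
theorem count_of_ldensR_pos {V : Set ℝ} (h : 0 < ldensR V) :
    ∃ c : ℝ, 0 < c ∧ ∀ᶠ b : ℕ in atTop, c * 2 ^ b ≤
      (({m : ℕ | ∃ t ∈ V, (m : ℝ) ≤ t ∧ t < m + 1} ∩ Set.Iio (2 ^ b)).ncard : ℝ) + 1 := by
  obtain ⟨c, hc, hN⟩ := exists_of_ldensR_pos h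
  refine ⟨c, hc, ?_⟩
  have ht : Tendsto (fun b : ℕ => (2:ℝ) ^ b) atTop atTop :=
    tendsto_pow_atTop_atTop_of_one_lt (by norm_num)
  filter_upwards [ht.eventually hN] with b hb
  rw [le_div_iff₀ (by positivity)] at hb
  refine hb.trans ?_
  set A := {m : ℕ | ∃ t ∈ V, (m : ℝ) ≤ t ∧ t < m + 1}
  have hfin : (A ∩ Set.Iio (2 ^ b)).Finite := (Set.finite_Iio _).inter_of_right _
  have hsub : V ∩ Set.Icc 0 ((2:ℝ) ^ b) ⊆
      (⋃ m ∈ hfin.toFinset, Set.Ico (m : ℝ) (m + 1)) ∪ {(2:ℝ) ^ b} := by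
    rintro t ⟨htV, ht0, ht1⟩
    rcases ht1.lt_or_eq with hlt | heq
    · left
      simp only [Set.mem_iUnion]
      have h1 := Nat.floor_le ht0
      have h2 := Nat.lt_floor_add_one t
      refine ⟨⌊t⌋₊, ?_, h1, h2⟩
      rw [Set.Finite.mem_toFinset]
      refine ⟨⟨t, htV, h1, h2⟩, ?_⟩
      have : ((⌊t⌋₊ : ℕ) : ℝ) < ((2 ^ b : ℕ) : ℝ) := by push_cast; linarith
      exact_mod_cast this
    · right; exact heq
  have hv : volume (V ∩ Set.Icc 0 ((2:ℝ) ^ b)) ≤ ((A ∩ Set.Iio (2 ^ b)).ncard : ENNReal) := by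
    refine (measure_mono hsub).trans ((measure_union_le _ _).trans ?_)
    rw [Real.volume_singleton, add_zero]
    refine (measure_biUnion_finset_le _ _).trans ?_
    simp [Set.ncard_eq_toFinset_card _ hfin]
  have := ENNReal.toReal_mono (ENNReal.natCast_ne_top _) hv
  simp only [ENNReal.toReal_natCast] at this
  linarith

/-! ### Choice of the phase -/

/-- The time `t` is at distance at least `δ` from the shifted lattice `θ + ℤ`: for such `t`, bumps of
half-width `δ` centred at `t + ℤ` do not meet the endpoints of the cells `[k + θ, k + θ + 1]`. -/
def GoodPhase (δ t θ : ℝ) : Prop := δ ≤ Int.fract (t - θ) ∧ Int.fract (t - θ) ≤ 1 - δ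

theorem measurableSet_goodPhase (δ t : ℝ) : MeasurableSet {θ | GoodPhase δ t θ} := by
  unfold GoodPhase
  have : Measurable fun θ : ℝ => Int.fract (t - θ) := measurable_fract.comp (by fun_prop)
  exact (measurableSet_le measurable_const this).inter (measurableSet_le this measurable_const)

theorem measurableSet_badPhase (δ t : ℝ) : MeasurableSet {θ | ¬ GoodPhase δ t θ} :=
  (measurableSet_goodPhase δ t).compl

theorem volume_bad_le (δ t : ℝ) (hδ : 0 < δ) (hδ1 : δ ≤ 1 / 2) :
    volume ({θ | ¬ GoodPhase δ t θ} ∩ Set.Icc 0 1) ≤ ENNReal.ofReal (6 * δ) := by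
  have hsub : {θ | ¬ GoodPhase δ t θ} ∩ Set.Icc (0:ℝ) 1 ⊆
      ⋃ i ∈ ({-1, 0, 1} : Finset ℤ), Set.Icc (t - (⌊t⌋ + i : ℤ) - δ) (t - (⌊t⌋ + i : ℤ) + δ) := by
    rintro θ ⟨hg, h0, h1⟩
    have hn : ∃ n : ℤ, |t - θ - n| ≤ δ := by
      have e := Int.floor_add_fract (t - θ)
      simp only [GoodPhase, Set.mem_ofPred_eq, not_and_or, not_le] at hg
      rcases hg with hg | hg
      · refine ⟨⌊t - θ⌋, ?_⟩
        have := Int.fract_nonneg (t - θ)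
        rw [abs_le]; constructor <;> linarith
      · refine ⟨⌊t - θ⌋ + 1, ?_⟩
        have := Int.fract_lt_one (t - θ)
        push_cast
        rw [abs_le]; constructor <;> linarith
    obtain ⟨n, hn⟩ := hn
    rw [abs_le] at hn
    have f1 := Int.floor_le t
    have f2 := Int.lt_floor_add_one t
    have a1 : n < ⌊t⌋ + 2 := by
      have : (n : ℝ) < ((⌊t⌋ + 2 : ℤ) : ℝ) := by push_cast; linarith
      exact_mod_cast this
    have a2 : ⌊t⌋ - 2 < n := by
      have : ((⌊t⌋ - 2 : ℤ) : ℝ) < (n : ℝ) := by push_cast; linarith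
      exact_mod_cast this
    simp only [Set.mem_iUnion]
    refine ⟨n - ⌊t⌋, by simp; omega, ?_⟩
    rw [show ⌊t⌋ + (n - ⌊t⌋) = n by ring]
    constructor <;> linarith
  refine (measure_mono hsub).trans ((measure_biUnion_finset_le _ _).trans ?_)
  simp only [Real.volume_Icc]
  rw [Finset.sum_congr rfl (g := fun _ => ENNReal.ofReal (2 * δ)) (fun i _ => by congr 1; ring)]
  rw [Finset.sum_const, show ({-1, 0, 1} : Finset ℤ).card = 3 from rfl, nsmul_eq_mul,
    show 6 * δ = (3 : ℕ) * (2 * δ) by push_cast; ring, ENNReal.ofReal_mul (by positivity)]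
  simp

/-- The bump half-width attached to the `j`-th target. It is summable in `j`, with a sum small enough
that one phase `θ` can serve all targets at once in `exists_phase`. -/
noncomputable def phaseTol (j : ℕ) : ℝ := (1 / 2) ^ (j + 5)

theorem phaseTol_pos (j : ℕ) : 0 < phaseTol j := by unfold phaseTol; positivity

theorem phaseTol_le (j : ℕ) : phaseTol j ≤ 1 / 32 := by
  unfold phaseTol
  rw [pow_add]
  have : ((1:ℝ) / 2) ^ j ≤ 1 := pow_le_one₀ (by norm_num) (by norm_num)
  nlinarith

open Classical in
/-- One phase `θ` is good, simultaneously for all targets `j`, for at least half of the prescribed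
times `t j m`, `m ∈ S j`. For a single `j`, Markov's inequality bounds the measure of the phases
failing this by `12 * phaseTol j`, and these measures sum to `3 / 4`. -/
theorem exists_phase (t : ℕ → ℕ → ℝ) (S : ℕ → Finset ℕ) :
    ∃ θ ∈ Set.Icc (0:ℝ) 1, ∀ j,
      (S j).card ≤ 2 * ((S j).filter fun m => GoodPhase (phaseTol j) (t j m) θ).card := by
  by_contra! hcon
  set bad : ℕ → Set ℝ := fun j => {θ | 2 * ((S j).filter
    fun m => GoodPhase (phaseTol j) (t j m) θ).card < (S j).card} with hbad
  set μ : Measure ℝ := volume.restrict (Set.Icc 0 1) with hμ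
  have hcover : Set.Icc (0:ℝ) 1 ⊆ ⋃ j, bad j := by
    intro θ hθ
    obtain ⟨j, hj⟩ := hcon θ hθ
    exact Set.mem_iUnion.2 ⟨j, hj⟩
  have hμb : ∀ j, μ (bad j) ≤ ENNReal.ofReal (12 * phaseTol j) := by
    intro j
    set F : ℝ → ENNReal := fun θ =>
      ∑ m ∈ S j, Set.indicator {θ | ¬ GoodPhase (phaseTol j) (t j m) θ} 1 θ with hF
    have hFm : Measurable F := by
      refine Finset.measurable_sum _ fun m _ => ?_
      exact measurable_one.indicator (measurableSet_badPhase _ _)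
    have hFeq : ∀ θ, F θ = (((S j).filter fun m => ¬ GoodPhase (phaseTol j) (t j m) θ).card :
        ENNReal) := by
      intro θ
      simp [hF, Set.indicator_apply, Finset.sum_ite]
    have hint : ∫⁻ θ, F θ ∂μ ≤ (S j).card * ENNReal.ofReal (6 * phaseTol j) := by
      simp only [hF]
      rw [lintegral_finsetSum _ (fun m _ =>
        measurable_one.indicator (measurableSet_badPhase _ _))]
      rw [← nsmul_eq_mul]
      refine Finset.sum_le_card_nsmul _ _ _ fun m _ => ?_
      rw [lintegral_indicator_one (measurableSet_badPhase _ _), hμ,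
        Measure.restrict_apply (measurableSet_badPhase _ _)]
      exact volume_bad_le _ _ (phaseTol_pos j) ((phaseTol_le j).trans (by norm_num))
    rcases Nat.eq_zero_or_pos (S j).card with h0 | h0
    · have : bad j = ∅ := by
        ext θ; simp [hbad, h0]
      simp [this]
    have hsub : bad j ⊆ {θ | ((S j).card : ENNReal) ≤ 2 * F θ} := by
      intro θ hθ
      simp only [hbad, Set.mem_ofPred_eq] at hθ ⊢
      rw [hFeq]
      have := Finset.card_filter_add_card_filter_not (s := S j)
        (fun m => GoodPhase (phaseTol j) (t j m) θ)
      have h2 : (S j).card ≤ 2 * ((S j).filter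
        fun m => ¬ GoodPhase (phaseTol j) (t j m) θ).card := by omega
      exact_mod_cast h2
    have hmk := mul_meas_ge_le_lintegral (μ := μ) (hFm.const_mul 2) ((S j).card : ENNReal)
    rw [lintegral_const_mul _ hFm] at hmk
    have hne : ((S j).card : ENNReal) ≠ 0 := by exact_mod_cast h0.ne'
    have h3 : ((S j).card : ENNReal) * μ (bad j) ≤
        (S j).card * ENNReal.ofReal (12 * phaseTol j) := by
      calc ((S j).card : ENNReal) * μ (bad j) ≤ _ := mul_le_mul_right (measure_mono hsub) _
        _ ≤ _ := hmk
        _ ≤ 2 * ((S j).card * ENNReal.ofReal (6 * phaseTol j)) := mul_le_mul_right hint _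
        _ = _ := by
          rw [show 12 * phaseTol j = 2 * (6 * phaseTol j) by ring,
            ENNReal.ofReal_mul (p := 2) (by norm_num)]
          simp; ring
    exact (ENNReal.mul_le_mul_iff_right hne (ENNReal.natCast_ne_top _)).1 h3
  have h1 : (1 : ENNReal) ≤ ∑' j, ENNReal.ofReal (12 * phaseTol j) := by
    calc (1 : ENNReal) = μ (Set.Icc 0 1) := by simp [hμ]
      _ ≤ μ (⋃ j, bad j) := measure_mono hcover
      _ ≤ ∑' j, μ (bad j) := measure_iUnion_le _
      _ ≤ _ := ENNReal.tsum_le_tsum hμb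
  have hs : HasSum (fun j => 12 * phaseTol j) (3 / 4) := by
    have := (hasSum_geometric_two).mul_left (12 * (1 / 32 : ℝ))
    have e : (fun j => 12 * phaseTol j) = fun i : ℕ => 12 * (1 / 32) * (1 / 2) ^ i := by
      funext j; unfold phaseTol; rw [pow_add]; ring
    rw [e, show (3:ℝ) / 4 = 12 * (1 / 32) * 2 by norm_num]
    exact this
  rw [← ENNReal.ofReal_tsum_of_nonneg (fun j => by have := phaseTol_pos j; positivity) hs.summable,
    hs.tsum_eq] at h1
  rw [← ENNReal.ofReal_one, ENNReal.ofReal_le_ofReal_iff (by norm_num)] at h1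
  norm_num at h1

/-! ### Cell integrals and bump trains -/

/-- On shifts of bounded length the weight is almost increasing, with a uniform constant. -/
theorem Admissible.exists_const {ρ : ℝ → ℝ} (hρ : Admissible ρ) (L : ℝ) :
    ∃ C : ℝ, 0 < C ∧ ∀ τ s : ℝ, 0 ≤ s → s ≤ L → ρ τ ≤ C * ρ (τ + s) := by
  obtain ⟨-, hpos, M, hM, ω, h⟩ := hρ
  refine ⟨M * Real.exp (|ω| * |L|), by positivity, fun τ s h0 h1 => ?_⟩
  rcases h0.eq_or_lt with rfl | h0
  · have h2 : 1 ≤ M * Real.exp (|ω| * |L|) :=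
      one_le_mul_of_one_le_of_one_le hM (Real.one_le_exp (by positivity))
    rw [add_zero]
    nlinarith [hpos τ]
  · refine (h τ s h0).trans ?_
    have : ω * s ≤ |ω| * |L| :=
      (mul_le_mul_of_nonneg_right (le_abs_self ω) h0.le).trans
        (mul_le_mul_of_nonneg_left (h1.trans (le_abs_self L)) (abs_nonneg _))
    have := hpos (τ + s)
    gcongr

theorem tsum_lintegral_windows (F : ℝ → ENNReal) :
    ∑' k : ℤ, ∫⁻ x in Set.Ioc (k : ℝ) (k + 4), F x = 4 * ∫⁻ x, F x := by
  have h1 : ∑' k : ℤ, ∫⁻ x in Set.Ioc (k : ℝ) (k + 1), F x = ∫⁻ x, F x := by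
    rw [← lintegral_iUnion (fun k => measurableSet_Ioc) (Set.pairwise_disjoint_Ioc_intCast ℝ),
      iUnion_Ioc_intCast, setLIntegral_univ]
  have h2 : ∀ i : ℤ, ∑' k : ℤ, ∫⁻ x in Set.Ioc ((k : ℝ) + i) (k + i + 1), F x = ∫⁻ x, F x := by
    intro i
    rw [← h1, ← (Equiv.addRight i).tsum_eq (fun k : ℤ => ∫⁻ x in Set.Ioc (k : ℝ) (k + 1), F x)]
    simp
  have h3 : ∀ k : ℤ, ∫⁻ x in Set.Ioc (k : ℝ) (k + 4), F x =
      ∑ i ∈ ({0, 1, 2, 3} : Finset ℤ), ∫⁻ x in Set.Ioc ((k : ℝ) + i) (k + i + 1), F x := by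
    intro k
    have sp : ∀ a b c : ℝ, a ≤ b → b ≤ c → ∫⁻ x in Set.Ioc a c, F x =
        (∫⁻ x in Set.Ioc a b, F x) + ∫⁻ x in Set.Ioc b c, F x := by
      intro a b c h h'
      rw [← Set.Ioc_union_Ioc_eq_Ioc h h', lintegral_union measurableSet_Ioc]
      rw [Set.Ioc_disjoint_Ioc]
      simp [h, h']
    rw [sp k (k + 1) (k + 4) (by linarith) (by linarith),
      sp (k + 1) (k + 2) (k + 4) (by linarith) (by linarith),
      sp (k + 2) (k + 3) (k + 4) (by linarith) (by linarith)]
    simp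
    ring_nf
  simp_rw [h3]
  rw [Summable.tsum_finsetSum (fun _ _ => ENNReal.summable)]
  simp only [h2]
  simp

/-- Jensen's inequality on an interval of length one. -/
theorem lintegral_rpow_le {p : ℝ} (hp : 1 ≤ p) {e : ℝ → ℝ} (he : Measurable e) (a : ℝ) :
    (∫⁻ x in Set.Ioc a (a + 1), ‖e x‖ₑ) ^ p ≤ ∫⁻ x in Set.Ioc a (a + 1), ‖e x‖ₑ ^ p := by
  have : IsProbabilityMeasure (volume.restrict (Set.Ioc a (a + 1))) := ⟨by simp⟩
  have := eLpNorm'_le_eLpNorm'_of_exponent_le (μ := volume.restrict (Set.Ioc a (a + 1)))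
    (f := e) one_pos hp he.aestronglyMeasurable
  simp only [eLpNorm', ENNReal.rpow_one, one_div, inv_one] at this
  have h2 := ENNReal.rpow_le_rpow this (by linarith : 0 ≤ p)
  rwa [ENNReal.rpow_inv_rpow (by linarith)] at h2

theorem window_le {p C : ℝ} (hp : 1 ≤ p) {ρ : ℝ → ℝ} (hC : 0 < C)
    (hρC : ∀ τ s : ℝ, 0 ≤ s → s ≤ 4 → ρ τ ≤ C * ρ (τ + s))
    {e : ℝ → ℝ} (he : Measurable e) {k a : ℝ} (hk : k ≤ a) (ha : a ≤ k + 3) :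
    (∫⁻ x in Set.Ioc a (a + 1), ‖e x‖ₑ) ^ p * ENNReal.ofReal (ρ k) ≤
      ENNReal.ofReal C * ∫⁻ x in Set.Ioc k (k + 4), ENNReal.ofReal (|e x| ^ p * ρ x) := by
  calc _ ≤ (∫⁻ x in Set.Ioc a (a + 1), ‖e x‖ₑ ^ p) * ENNReal.ofReal (ρ k) :=
        mul_le_mul_left (lintegral_rpow_le hp he a) _
    _ = ∫⁻ x in Set.Ioc a (a + 1), ‖e x‖ₑ ^ p * ENNReal.ofReal (ρ k) := by
        rw [lintegral_mul_const _ (he.enorm.pow_const p)]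
    _ ≤ ∫⁻ x in Set.Ioc a (a + 1), ENNReal.ofReal C * ENNReal.ofReal (|e x| ^ p * ρ x) := by
        refine setLIntegral_mono' measurableSet_Ioc fun x hx => ?_
        rw [Real.enorm_eq_ofReal_abs, ENNReal.ofReal_rpow_of_nonneg (abs_nonneg _) (by linarith),
          ← ENNReal.ofReal_mul (by positivity), ← ENNReal.ofReal_mul hC.le]
        refine ENNReal.ofReal_le_ofReal ?_
        have h := hρC k (x - k) (by linarith [hx.1]) (by linarith [hx.2])
        rw [add_sub_cancel] at h
        have h2 : 0 ≤ |e x| ^ p := by positivity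
        nlinarith
    _ ≤ ∫⁻ x in Set.Ioc k (k + 4), ENNReal.ofReal C * ENNReal.ofReal (|e x| ^ p * ρ x) :=
        lintegral_mono_set (Set.Ioc_subset_Ioc hk (by linarith))
    _ = _ := by rw [lintegral_const_mul' _ _ ENNReal.ofReal_ne_top]

theorem window_integrable {p C : ℝ} (hp : 1 ≤ p) {ρ : ℝ → ℝ} (hpos : ∀ x, 0 < ρ x) (hC : 0 < C)
    (hρC : ∀ τ s : ℝ, 0 ≤ s → s ≤ 4 → ρ τ ≤ C * ρ (τ + s))
    {e : ℝ → ℝ} (he : Measurable e) (hfin : ∫⁻ x, ENNReal.ofReal (|e x| ^ p * ρ x) < ⊤) (a : ℝ) :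
    IntervalIntegrable e volume a (a + 1) := by
  rw [intervalIntegrable_iff_integrableOn_Ioc_of_le (by linarith)]
  refine ⟨he.aestronglyMeasurable, ?_⟩
  have h := window_le hp hC hρC he (le_refl a) (by linarith)
  have h2 : (∫⁻ x in Set.Ioc a (a + 1), ‖e x‖ₑ) ^ p * ENNReal.ofReal (ρ a) < ⊤ :=
    h.trans_lt (ENNReal.mul_lt_top ENNReal.ofReal_lt_top
      ((setLIntegral_le_lintegral _ _).trans_lt hfin))
  have hne : ENNReal.ofReal (ρ a) ≠ 0 := by simpa using hpos a
  show ∫⁻ x in Set.Ioc a (a + 1), ‖e x‖ₑ < ⊤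
  by_contra htop
  rw [not_lt, top_le_iff] at htop
  rw [htop, ENNReal.top_rpow_of_pos (by linarith), ENNReal.top_mul hne] at h2
  exact lt_irrefl _ h2

theorem summable_of_ofReal {ι : Type*} {a : ι → ℝ} (ha : ∀ i, 0 ≤ a i) {H : ℝ} (hH : 0 ≤ H)
    (h : ∑' i, ENNReal.ofReal (a i) ≤ ENNReal.ofReal H) : Summable a ∧ ∑' i, a i ≤ H := by
  have hs : Summable a := by
    have := ENNReal.summable_toReal (h.trans_lt ENNReal.ofReal_lt_top).ne
    simpa [ENNReal.toReal_ofReal, ha] using this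
  refine ⟨hs, ?_⟩
  rwa [← ENNReal.ofReal_tsum_of_nonneg ha hs, ENNReal.ofReal_le_ofReal_iff hH] at h

/-- The map sending `e` to its integrals over unit cells `[k + σ k, k + σ k + 1]`, `0 ≤ σ k ≤ 3`, is
bounded from `L_p^ρ` to `ℓ_p^v`, with a bound independent of the offsets `σ k`; the offsets may
vary arbitrarily with `k`. -/
theorem sampling_bound {p C : ℝ} (hp : 1 ≤ p) {ρ : ℝ → ℝ} (hpos : ∀ x, 0 < ρ x) (hC : 0 < C)
    (hρC : ∀ τ s : ℝ, 0 ≤ s → s ≤ 4 → ρ τ ≤ C * ρ (τ + s))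
    {e : ℝ → ℝ} (he : Measurable e) {η : ℝ} (hη : 0 ≤ η)
    (hfin : ∫⁻ x, ENNReal.ofReal (|e x| ^ p * ρ x) ≤ ENNReal.ofReal η)
    (σ : ℤ → ℝ) (h0 : ∀ k, 0 ≤ σ k) (h3 : ∀ k, σ k ≤ 3) :
    Summable (fun k : ℤ => |∫ x in (k + σ k)..(k + σ k + 1), e x| ^ p * ρ k) ∧
    ∑' k : ℤ, |∫ x in (k + σ k)..(k + σ k + 1), e x| ^ p * ρ k ≤ 4 * C * η := by
  refine summable_of_ofReal (fun k => by have := hpos k; positivity) (by positivity) ?_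
  calc _ ≤ ∑' k : ℤ, ENNReal.ofReal C *
          ∫⁻ x in Set.Ioc (k : ℝ) (k + 4), ENNReal.ofReal (|e x| ^ p * ρ x) := by
        refine ENNReal.tsum_le_tsum fun k => ?_
        refine le_trans ?_ (window_le hp hC hρC he (k := k) (a := k + σ k)
          (by linarith [h0 k]) (by linarith [h3 k]))
        rw [ENNReal.ofReal_mul (by positivity),
          ← ENNReal.ofReal_rpow_of_nonneg (abs_nonneg _) (by linarith),
          intervalIntegral.integral_of_le (by linarith), ← Real.enorm_eq_ofReal_abs]
        gcongr
        exact enorm_integral_le_lintegral_enorm _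
    _ = ENNReal.ofReal C * (4 * ∫⁻ x, ENNReal.ofReal (|e x| ^ p * ρ x)) := by
        rw [ENNReal.tsum_mul_left, tsum_lintegral_windows]
    _ ≤ ENNReal.ofReal C * (4 * ENNReal.ofReal η) := by gcongr
    _ = _ := by
        rw [show 4 * C * η = C * (4 * η) by ring, ENNReal.ofReal_mul hC.le,
          ENNReal.ofReal_mul (p := 4) (by norm_num)]
        simp

/-- The target function in `L_p^ρ` encoding a finitely supported sequence `y`: a bump of integral
`y l` and half-width `δ` centred at `l + 2`. The shift by `2` guarantees that the cells read at a
visit time lie to the right of `k`, where `ρ k` is controlled by `ρ`. -/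
noncomputable def bumpTrain (δ : ℝ) (y : ℤ →₀ ℚ) (r : ℝ) : ℝ :=
  ∑ l ∈ y.support, (y l : ℝ) *
    (Set.Ioc ((l : ℝ) + 2 - δ) (l + 2 + δ)).indicator (fun _ => 1 / (2 * δ)) r

theorem measurable_bumpTrain (δ : ℝ) (y : ℤ →₀ ℚ) : Measurable (bumpTrain δ y) := by
  unfold bumpTrain
  refine Finset.measurable_sum _ fun l _ => ?_
  exact (measurable_const.indicator measurableSet_Ioc).const_mul _

theorem memLpRho_bumpTrain {p : ℝ} (hp : 1 ≤ p) {ρ : ℝ → ℝ} (hρ : Admissible ρ) {δ : ℝ}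
    (hδ : 0 < δ) (hδ1 : δ ≤ 1 / 32) (y : ℤ →₀ ℚ) : MemLpRho p ρ (bumpTrain δ y) := by
  refine ⟨measurable_bumpTrain δ y, ?_⟩
  obtain ⟨K, hK⟩ : ∃ K : ℝ, ∀ l ∈ y.support, |(l : ℝ)| ≤ K :=
    ⟨∑ l ∈ y.support, |(l : ℝ)|, fun l hl =>
      Finset.single_le_sum (f := fun l : ℤ => |(l : ℝ)|) (fun _ _ => abs_nonneg _) hl⟩
  obtain ⟨C, hC, hCρ⟩ := hρ.exists_const (2 * |K| + 6)
  set B : ℝ := ∑ l ∈ y.support, |(y l : ℝ)| * (1 / (2 * δ)) with hB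
  have hB0 : 0 ≤ B := Finset.sum_nonneg fun _ _ => by positivity
  have hbd : ∀ r, |bumpTrain δ y r| ≤ B := by
    intro r
    refine (Finset.abs_sum_le_sum_abs _ _).trans (Finset.sum_le_sum fun l _ => ?_)
    rw [abs_mul]
    gcongr
    rw [Set.indicator_apply]
    split_ifs
    · rw [abs_of_nonneg (by positivity)]
    · simp; positivity
  have hsupp : ∀ r, r ∉ Set.Icc (-|K|) (|K| + 4) → bumpTrain δ y r = 0 := by
    intro r hr
    refine Finset.sum_eq_zero fun l hl => ?_
    rw [Set.indicator_of_notMem, mul_zero]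
    intro hmem
    have h1 := abs_le.1 ((hK l hl).trans (le_abs_self K))
    exact hr ⟨by linarith [hmem.1], by linarith [hmem.2]⟩
  calc ∫⁻ x, ENNReal.ofReal (|bumpTrain δ y x| ^ p * ρ x)
      ≤ ∫⁻ x, (Set.Icc (-|K|) (|K| + 4)).indicator
          (fun _ => ENNReal.ofReal (B ^ p * (C * ρ (|K| + 4)))) x := by
        refine lintegral_mono fun x => ?_
        by_cases hx : x ∈ Set.Icc (-|K|) (|K| + 4)
        · rw [Set.indicator_of_mem hx]
          refine ENNReal.ofReal_le_ofReal ?_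
          have h := hCρ x (|K| + 4 - x) (by linarith [hx.2]) (by linarith [hx.1])
          rw [add_sub_cancel] at h
          have := hρ.2.1 x
          have := hbd x
          gcongr
        · rw [Set.indicator_of_notMem hx, hsupp x hx]
          simp [Real.zero_rpow (by linarith : p ≠ 0)]
    _ < ⊤ := by
        rw [lintegral_indicator measurableSet_Icc, setLIntegral_const]
        exact ENNReal.mul_lt_top ENNReal.ofReal_lt_top (by simp)

theorem integrable_bumpTrain (δ : ℝ) (y : ℤ →₀ ℚ) (a b : ℝ) :
    IntervalIntegrable (bumpTrain δ y) volume a b := by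
  unfold bumpTrain
  refine Integrable.intervalIntegrable (integrable_finsetSum _ fun l _ => ?_)
  refine Integrable.const_mul ?_ _
  exact (integrable_indicator_iff measurableSet_Ioc).2 (integrableOn_const (by simp))

theorem integral_bumpTrain (δ : ℝ) (y : ℤ →₀ ℚ) (a : ℝ) :
    ∫ x in a..(a + 1), bumpTrain δ y x = ∑ l ∈ y.support, (y l : ℝ) *
      ∫ x in Set.Ioc a (a + 1) ∩ Set.Ioc ((l : ℝ) + 2 - δ) (l + 2 + δ), 1 / (2 * δ) := by
  unfold bumpTrain
  rw [intervalIntegral.integral_finsetSum]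
  · refine Finset.sum_congr rfl fun l _ => ?_
    rw [intervalIntegral.integral_const_mul, intervalIntegral.integral_of_le (by linarith),
      setIntegral_indicator measurableSet_Ioc]
  · intro l _
    refine Integrable.intervalIntegrable ?_
    refine Integrable.const_mul ?_ _
    exact (integrable_indicator_iff measurableSet_Ioc).2 (integrableOn_const (by simp))

/-- A unit cell containing the `k`-th bump away from its ends reads off exactly `y k`. -/
theorem integral_bumpTrain_eq {δ : ℝ} (hδ : 0 < δ) (y : ℤ →₀ ℚ) (k : ℤ) {σ : ℝ}
    (h1 : 1 + δ ≤ σ) (h2 : σ ≤ 2 - δ) :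
    ∫ x in (k + σ)..(k + σ + 1), bumpTrain δ y x = y k := by
  rw [integral_bumpTrain]
  have hz : ∀ l ∈ y.support, l ≠ k → (y l : ℝ) * ∫ x in Set.Ioc (k + σ) (k + σ + 1) ∩
      Set.Ioc ((l : ℝ) + 2 - δ) (l + 2 + δ), 1 / (2 * δ) = 0 := by
    intro l _ hlk
    have : Set.Ioc (k + σ) (k + σ + 1) ∩ Set.Ioc ((l : ℝ) + 2 - δ) (l + 2 + δ) = ∅ := by
      ext x
      simp only [Set.mem_inter_iff, Set.mem_Ioc, Set.mem_empty_iff_false, iff_false]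
      rintro ⟨⟨a1, a2⟩, a3, a4⟩
      rcases lt_or_gt_of_ne hlk with h | h
      · have : (l : ℝ) + 1 ≤ k := by exact_mod_cast h
        linarith
      · have : (k : ℝ) + 1 ≤ l := by exact_mod_cast h
        linarith
    rw [this]; simp
  have hk : Set.Ioc (k + σ) (k + σ + 1) ∩ Set.Ioc ((k : ℝ) + 2 - δ) (k + 2 + δ) =
      Set.Ioc ((k : ℝ) + 2 - δ) (k + 2 + δ) :=
    Set.inter_eq_right.2 (Set.Ioc_subset_Ioc (by linarith) (by linarith))
  rw [Finset.sum_eq_single k hz]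
  · rw [hk, setIntegral_const, measureReal_def, Real.volume_Ioc,
      ENNReal.toReal_ofReal (by linarith), smul_eq_mul]
    field_simp
    ring
  · intro h
    rw [Finsupp.notMem_support_iff.1 h]; simp

/-- Cells far from the support of `y` miss all bumps, whatever their offset. -/
theorem integral_bumpTrain_zero {δ : ℝ} (hδ1 : δ ≤ 1 / 32) (y : ℤ →₀ ℚ)
    {K k : ℤ} (hK : ∀ l ∈ y.support, |l| ≤ K) (hk : K + 4 < |k|) {σ : ℝ}
    (h1 : 0 ≤ σ) (h2 : σ ≤ 3) :
    ∫ x in (k + σ)..(k + σ + 1), bumpTrain δ y x = 0 := by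
  rw [integral_bumpTrain]
  refine Finset.sum_eq_zero fun l hl => ?_
  have : Set.Ioc (k + σ) (k + σ + 1) ∩ Set.Ioc ((l : ℝ) + 2 - δ) (l + 2 + δ) = ∅ := by
    ext x
    simp only [Set.mem_inter_iff, Set.mem_Ioc, Set.mem_empty_iff_false, iff_false]
    rintro ⟨⟨a1, a2⟩, a3, a4⟩
    have hl' := abs_le.1 (hK l hl)
    rcases lt_abs.1 hk with h | h
    · have : l + 5 ≤ k := by omega
      have : (l : ℝ) + 5 ≤ k := by exact_mod_cast this
      linarith
    · have : k + 5 ≤ l := by omega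
      have : (k : ℝ) + 5 ≤ l := by exact_mod_cast this
      linarith
  rw [this]; simp

/-! ### Visits, block counting and approximation -/

/-- If `T_t f` is close to the bump train of `y`, the phase `th n` is good for `t`, and the phases are
constant around `n = ⌊t - th n⌋ + 2` on a window depending on the support of `y`, then the `n`-th
shift of the cell integrals of `f` is close to `y`. Far from `n` the phases do not matter, since
`sampling_bound` is uniform in the offsets. -/
theorem visit_bound {p C : ℝ} (hp : 1 ≤ p) {ρ : ℝ → ℝ} (hpos : ∀ x, 0 < ρ x) (hC : 0 < C)
    (hρC : ∀ τ s : ℝ, 0 ≤ s → s ≤ 4 → ρ τ ≤ C * ρ (τ + s))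
    {f : ℝ → ℝ} (hf : MemLpRho p ρ f) {δ : ℝ} (hδ : 0 < δ) (hδ1 : δ ≤ 1 / 32)
    {th : ℤ → ℝ} (hth : ∀ k, th k ∈ Set.Icc (0:ℝ) 1) (y : ℤ →₀ ℚ) {K : ℤ}
    (hK : ∀ l ∈ y.support, |l| ≤ K) {η t : ℝ} (hη : 0 ≤ η)
    (hclose : ∫⁻ x, ENNReal.ofReal (|f (x + t) - bumpTrain δ y x| ^ p * ρ x) ≤ ENNReal.ofReal η)
    {n : ℤ} (hgood : GoodPhase δ t (th n)) (hn : n = ⌊t - th n⌋ + 2)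
    (hconst : ∀ k : ℤ, |k| ≤ K + 4 → th (k + n) = th n) :
    Summable (fun k : ℤ => |(∫ s in (((k + n : ℤ) : ℝ) + th (k + n))..
      (((k + n : ℤ) : ℝ) + th (k + n) + 1), f s) - y k| ^ p * ρ k) ∧
    ∑' k : ℤ, |(∫ s in (((k + n : ℤ) : ℝ) + th (k + n))..
      (((k + n : ℤ) : ℝ) + th (k + n) + 1), f s) - y k| ^ p * ρ k ≤ 4 * C * η := by
  obtain ⟨g1, g2⟩ := hgood
  have hfl := Int.floor_add_fract (t - th n)
  have hn' : (n : ℝ) = ⌊t - th n⌋ + 2 := by rw [hn]; push_cast; rw [← hn]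
  have hthn := hth n
  set e : ℝ → ℝ := fun x => f (x + t) - bumpTrain δ y x with he
  have hem : Measurable e :=
    (hf.1.comp (measurable_id.add_const t)).sub (measurable_bumpTrain δ y)
  set σ : ℤ → ℝ := fun k => n + th (k + n) - t with hσ
  have h0 : ∀ k, 0 ≤ σ k := fun k => by
    have := (hth (k + n)).1
    simp only [hσ]; linarith [hthn.2]
  have h3 : ∀ k, σ k ≤ 3 := fun k => by
    have := (hth (k + n)).2
    simp only [hσ]; linarith [hthn.1]
  have key : ∀ k : ℤ, (∫ s in (((k + n : ℤ) : ℝ) + th (k + n))..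
      (((k + n : ℤ) : ℝ) + th (k + n) + 1), f s) - y k =
      ∫ x in (k + σ k)..(k + σ k + 1), e x := by
    intro k
    have hfi := window_integrable hp hpos hC hρC hf.1 hf.2 (((k + n : ℤ) : ℝ) + th (k + n))
    have hend : ((k + n : ℤ) : ℝ) + th (k + n) = (k + σ k) + t := by
      simp only [hσ]; push_cast; ring
    have hend1 : ((k + n : ℤ) : ℝ) + th (k + n) + 1 = (k + σ k + 1) + t := by rw [hend]; ring
    rw [hend1, hend] at hfi
    rw [hend1, hend, ← intervalIntegral.integral_comp_add_right]
    have hfi2 : IntervalIntegrable (fun x => f (x + t)) volume (k + σ k) (k + σ k + 1) := by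
      have := hfi.comp_add_right t
      simpa using this
    rw [he, intervalIntegral.integral_sub hfi2 (integrable_bumpTrain _ _ _ _)]
    congr 1
    by_cases hk : |k| ≤ K + 4
    · have hc := hconst k hk
      refine (integral_bumpTrain_eq hδ y k ?_ ?_).symm
      · simp only [hσ, hc]; linarith
      · simp only [hσ, hc]; linarith
    · have hy : y k = 0 := by
        by_contra hne
        have := hK k (Finsupp.mem_support_iff.2 hne)
        omega
      rw [integral_bumpTrain_zero hδ1 y hK (not_le.1 hk) (h0 k) (h3 k), hy]; simp
  simp only [key]
  exact sampling_bound hp hpos hC hρC hem hη hclose σ h0 h3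

open Classical in
/-- In one dyadic block with phase `θ`, half of the visits are good by `hsel`; all but a bounded number
of them lie far from the ends of the block and produce an element `n` of `H` with
`n - m ∈ {1, 2}`. Hence `n` arises from at most two values of `m`. -/
theorem block_count {A H : Set ℕ} {tm : ℕ → ℝ} {δ θ : ℝ} {K b : ℕ}
    (htm : ∀ m ∈ A, (m : ℝ) ≤ tm m ∧ tm m < m + 1) (hθ : θ ∈ Set.Icc (0:ℝ) 1)
    (hsel : ((Finset.Ico (2 ^ b) (2 ^ (b + 1))).filter (· ∈ A)).card ≤
      2 * (((Finset.Ico (2 ^ b) (2 ^ (b + 1))).filter (· ∈ A)).filter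
        fun m => GoodPhase δ (tm m) θ).card)
    (hH : ∀ m ∈ A, ∀ n : ℕ, GoodPhase δ (tm m) θ → (n : ℤ) = ⌊tm m - θ⌋ + 2 →
      2 ^ b + K + 4 ≤ n → n + K + 4 < 2 ^ (b + 1) → n ∈ H) :
    (A ∩ Set.Ico (2 ^ b) (2 ^ (b + 1))).ncard ≤
      4 * (H ∩ Set.Ico (2 ^ b) (2 ^ (b + 1))).ncard + (4 * K + 20) := by
  have conv : ∀ S : Set ℕ, (S ∩ Set.Ico (2 ^ b) (2 ^ (b + 1))).ncard =
      ((Finset.Ico (2 ^ b) (2 ^ (b + 1))).filter (· ∈ S)).card := by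
    intro S
    rw [← Set.ncard_coe_finset]
    congr 1
    ext x; simp; tauto
  rw [conv A, conv H]
  set G := ((Finset.Ico (2 ^ b) (2 ^ (b + 1))).filter (· ∈ A)).filter
        fun m => GoodPhase δ (tm m) θ with hG
  set H' := (Finset.Ico (2 ^ b) (2 ^ (b + 1))).filter (· ∈ H) with hH'
  have hsub : G ⊆ ((H'.image (· - 1)) ∪ (H'.image (· - 2))) ∪
      (Finset.Ico (2 ^ b) (2 ^ b + K + 4) ∪
        Finset.Ico (2 ^ (b + 1) - K - 6) (2 ^ (b + 1))) := by
    intro m hm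
    simp only [hG, Finset.mem_filter, Finset.mem_Ico] at hm
    obtain ⟨⟨⟨m1, m2⟩, mA⟩, mg⟩ := hm
    by_cases hint : 2 ^ b + K + 4 ≤ m ∧ m + K + 6 < 2 ^ (b + 1)
    · obtain ⟨t1, t2⟩ := htm m mA
      have f1 : (m : ℤ) - 1 ≤ ⌊tm m - θ⌋ := by
        rw [Int.le_floor]; push_cast; linarith [hθ.2]
      have f2 : ⌊tm m - θ⌋ < (m : ℤ) + 1 := by
        rw [Int.floor_lt]; push_cast; linarith [hθ.1]
      set n := (⌊tm m - θ⌋ + 2).toNat with hn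
      have hn' : (n : ℤ) = ⌊tm m - θ⌋ + 2 := by omega
      have hnH : n ∈ H := hH m mA n mg hn' (by omega) (by omega)
      have hnH' : n ∈ H' := by
        simp only [hH', Finset.mem_filter, Finset.mem_Ico]
        exact ⟨⟨by omega, by omega⟩, hnH⟩
      refine Finset.mem_union_left _ ?_
      have : m = n - 1 ∨ m = n - 2 := by omega
      rcases this with h | h
      · exact Finset.mem_union_left _ (Finset.mem_image.2 ⟨n, hnH', h.symm⟩)
      · exact Finset.mem_union_right _ (Finset.mem_image.2 ⟨n, hnH', h.symm⟩)
    · refine Finset.mem_union_right _ ?_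
      simp only [Finset.mem_union, Finset.mem_Ico]
      omega
  have c0 := Finset.card_le_card hsub
  have c1 := Finset.card_union_le ((H'.image (· - 1)) ∪ (H'.image (· - 2)))
    (Finset.Ico (2 ^ b) (2 ^ b + K + 4) ∪ Finset.Ico (2 ^ (b + 1) - K - 6) (2 ^ (b + 1)))
  have c2 := Finset.card_union_le (H'.image (· - 1)) (H'.image (· - 2))
  have c3 := Finset.card_union_le (Finset.Ico (2 ^ b) (2 ^ b + K + 4))
    (Finset.Ico (2 ^ (b + 1) - K - 6) (2 ^ (b + 1)))
  have c4 : (H'.image (· - 1)).card ≤ H'.card := Finset.card_image_le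
  have c5 : (H'.image (· - 2)).card ≤ H'.card := Finset.card_image_le
  simp only [Nat.card_Ico] at c3
  omega

/-- Finitely supported rational sequences are dense in `ℓ_p^v`. -/
theorem exists_finsupp_approx {p : ℝ} (hp : 1 ≤ p) {v : ℤ → ℝ} (hv : ∀ k, 0 < v k) {y : ℤ → ℝ}
    (hy : Memlpv p v y) {κ : ℝ} (hκ : 0 < κ) :
    ∃ z : ℤ →₀ ℚ, Summable (fun k => |(z k : ℝ) - y k| ^ p * v k) ∧
      ∑' k, |(z k : ℝ) - y k| ^ p * v k ≤ κ := by
  classical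
  unfold Memlpv at hy
  set a : ℤ → ℝ := fun k => |y k| ^ p * v k with ha
  obtain ⟨s, hs⟩ := (hy.hasSum.eventually (lt_mem_nhds
    (show ∑' k, a k - κ / 2 < ∑' k, a k by linarith))).exists
  set c : ℝ := κ / (2 * (s.card + 1)) with hc
  have hc0 : 0 < c := by positivity
  have happ : ∀ k, ∃ q : ℚ, |(q : ℝ) - y k| ^ p * v k < c := by
    intro k
    have hcont : Continuous fun z : ℝ => |z - y k| ^ p * v k :=
      ((continuous_id.sub continuous_const).abs.rpow_const
        (fun _ => Or.inr (by linarith))).mul continuous_const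
    have hopen : IsOpen {z : ℝ | |z - y k| ^ p * v k < c} := isOpen_lt hcont continuous_const
    have hne : ({z : ℝ | |z - y k| ^ p * v k < c}).Nonempty :=
      ⟨y k, by simp [Real.zero_rpow (by linarith : p ≠ 0), hc0]⟩
    obtain ⟨z, hz, q, rfl⟩ := Rat.denseRange_cast (𝕜 := ℝ) |>.inter_open_nonempty _ hopen hne
    exact ⟨q, hz⟩
  choose q hq using happ
  refine ⟨Finsupp.onFinset s (fun k => if k ∈ s then q k else 0) (by intro k; simp; tauto), ?_⟩
  set z := Finsupp.onFinset s (fun k => if k ∈ s then q k else 0) (by intro k; simp; tauto) with hz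
  have hle : ∀ k, |(z k : ℝ) - y k| ^ p * v k ≤
      (if k ∈ s then c else 0) + (↑s : Set ℤ)ᶜ.indicator a k := by
    intro k
    by_cases hk : k ∈ s
    · simpa [hz, hk] using (hq k).le
    · simp [hz, hk, ha]
  have hs1 : HasSum (fun k => if k ∈ s then c else 0) (∑ k ∈ s, if k ∈ s then c else 0) :=
    hasSum_sum_of_ne_finset_zero (by intro k hk; simp [hk])
  have hs2 : Summable ((↑s : Set ℤ)ᶜ.indicator a) := hy.indicator _
  have hs3 : ∑' k, (↑s : Set ℤ)ᶜ.indicator a k ≤ κ / 2 := by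
    have := hy.sum_add_tsum_compl (s := s)
    rw [tsum_subtype] at this
    linarith
  have hsum : ∑ k ∈ s, (if k ∈ s then c else 0) ≤ κ / 2 := by
    rw [Finset.sum_congr rfl (g := fun _ => c) (fun k hk => by simp [hk]), Finset.sum_const,
      nsmul_eq_mul, hc]
    rw [mul_div_assoc', div_le_div_iff₀ (by positivity) (by positivity)]
    nlinarith
  have hnn : ∀ k, 0 ≤ |(z k : ℝ) - y k| ^ p * v k := fun k => by have := hv k; positivity
  have hS : Summable fun k => |(z k : ℝ) - y k| ^ p * v k :=
    Summable.of_nonneg_of_le hnn hle (hs1.summable.add hs2)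
  refine ⟨hS, (hS.tsum_le_tsum hle (hs1.summable.add hs2)).trans ?_⟩
  rw [hs1.summable.tsum_add hs2, hs1.tsum_eq]
  linarith

theorem abs_sub_rpow_le {p : ℝ} (hp : 1 ≤ p) (a b c : ℝ) :
    |a - c| ^ p ≤ 2 ^ p * (|a - b| ^ p + |b - c| ^ p) := by
  have h1 : |a - c| ≤ 2 * max |a - b| |b - c| := by
    have := abs_sub_le a b c
    have := le_max_left |a - b| |b - c|
    have := le_max_right |a - b| |b - c|
    linarith
  have h2 : (max |a - b| |b - c|) ^ p ≤ |a - b| ^ p + |b - c| ^ p := by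
    have e1 : 0 ≤ |a - b| ^ p := by positivity
    have e2 : 0 ≤ |b - c| ^ p := by positivity
    rcases max_choice |a - b| |b - c| with h | h <;> rw [h] <;> linarith
  calc |a - c| ^ p ≤ (2 * max |a - b| |b - c|) ^ p :=
        Real.rpow_le_rpow (abs_nonneg _) h1 (by linarith)
    _ = 2 ^ p * (max |a - b| |b - c|) ^ p :=
        Real.mul_rpow (by norm_num) (le_max_of_le_left (abs_nonneg _))
    _ ≤ _ := by gcongr

/-! ### Assembling the proof -/

/-- Let `1 ≤ p < ∞` and `ρ` be an admissible weight function on ℝ.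
If the translation semigroup is frequently hypercyclic on `L_p^ρ(ℝ)`, then the backward
shift is frequently hypercyclic on `ℓ_p^v` with `v_k = ρ(k)`. -/
theorem backwardShift_freqHypercyclic_of_translation_freqHypercyclic
    (p : ℝ) (hp : 1 ≤ p) (ρ : ℝ → ℝ) (hρ : Admissible ρ)
    (hFH : FHTransLp p ρ) :
    FHBackwardShift p (fun k : ℤ => ρ (k : ℝ)) := by
  classical
  obtain ⟨f, hf, hvis⟩ := hFH
  have hpos := hρ.2.1
  obtain ⟨C, hC, hρC⟩ := hρ.exists_const 4
  obtain ⟨tgt, htgt⟩ := exists_surjective_nat ((ℤ →₀ ℚ) × ℕ)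
  set V : ℕ → Set ℝ := fun j => {t : ℝ | 0 ≤ t ∧
      (∫⁻ x : ℝ, ENNReal.ofReal (|f (x + t) - bumpTrain (phaseTol j) (tgt j).1 x| ^ p * ρ x)) ≤
        ENNReal.ofReal ((1 / ((tgt j).2 + 1 : ℝ)) ^ p)} with hV
  have hVd : ∀ j, 0 < ldensR (V j) := fun j =>
    hvis _ (memLpRho_bumpTrain hp hρ (phaseTol_pos j) (phaseTol_le j) _) _ (by positivity)
  set A : ℕ → Set ℕ := fun j => {m : ℕ | ∃ t ∈ V j, (m : ℝ) ≤ t ∧ t < m + 1} with hA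
  have htm : ∀ j m, ∃ t, m ∈ A j → t ∈ V j ∧ (m : ℝ) ≤ t ∧ t < m + 1 := by
    intro j m
    by_cases h : m ∈ A j
    · obtain ⟨t, ht⟩ := h
      exact ⟨t, fun _ => ht⟩
    · exact ⟨0, fun h' => absurd h' h⟩
  choose tm htm using htm
  choose Θ hΘ hsel using fun b : ℕ => exists_phase tm
    (fun j => (Finset.Ico (2 ^ b) (2 ^ (b + 1))).filter (· ∈ A j))
  -- The phase is constant on each dyadic block; its value at `k ≤ 0` plays no role.
  set th : ℤ → ℝ := fun k => Θ (Nat.log 2 k.toNat) with hth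
  have hth01 : ∀ k, th k ∈ Set.Icc (0:ℝ) 1 := fun k => hΘ _
  have hthb : ∀ (b : ℕ) (k : ℤ), 2 ^ b ≤ k → k < 2 ^ (b + 1) → th k = Θ b := by
    intro b k h1 h2
    have h0 : (0 : ℤ) < 2 ^ b := by positivity
    have e : (k.toNat : ℤ) = k := Int.toNat_of_nonneg (by omega)
    have : Nat.log 2 k.toNat = b := by
      refine Nat.log_eq_of_pow_le_of_lt_pow ?_ ?_
      · rw [← e] at h1; exact_mod_cast h1
      · rw [← e] at h2; exact_mod_cast h2
    simp only [hth, this]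
  refine ⟨fun k => ∫ s in ((k : ℝ) + th k)..(k + th k + 1), f s, ?_, ?_⟩
  · exact (sampling_bound hp hpos hC hρC hf.1 ENNReal.toReal_nonneg
      (by rw [ENNReal.ofReal_toReal hf.2.ne]) th (fun k => (hth01 k).1)
      (fun k => (hth01 k).2.trans (by norm_num))).1
  intro y hy ε hε
  -- `κ` is the error allowed to each half of `abs_sub_rpow_le`.
  set κ : ℝ := ε ^ p / 2 ^ p / 2 with hκ
  have hκ0 : 0 < κ := by positivity
  obtain ⟨z, hzs, hzκ⟩ := exists_finsupp_approx hp (fun k : ℤ => hpos (k : ℝ)) hy hκ0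
  obtain ⟨q, hq⟩ := exists_nat_one_div_lt (show 0 < κ / (4 * C) by positivity)
  obtain ⟨j, hj⟩ := htgt (z, q)
  obtain ⟨c, hc, hcA⟩ := count_of_ldensR_pos (hVd j)
  set K : ℕ := ∑ l ∈ z.support, l.natAbs with hKdef
  have hK : ∀ l ∈ z.support, |l| ≤ (K : ℤ) := by
    intro l hl
    have := Finset.single_le_sum (f := fun l : ℤ => l.natAbs) (fun _ _ => Nat.zero_le _) hl
    rw [Int.abs_eq_natAbs]
    exact_mod_cast this
  have hη : 4 * C * (1 / ((q : ℝ) + 1)) ^ p ≤ κ := by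
    have h1 : (1 / ((q : ℝ) + 1)) ^ p ≤ 1 / ((q : ℝ) + 1) := by
      have hle : 1 / ((q : ℝ) + 1) ≤ 1 := by
        rw [div_le_one (by positivity)]; linarith [Nat.cast_nonneg (α := ℝ) q]
      have := Real.rpow_le_rpow_of_exponent_ge (x := 1 / ((q : ℝ) + 1)) (by positivity) hle hp
      rwa [Real.rpow_one] at this
    have h2 := h1.trans hq.le
    rw [le_div_iff₀ (by positivity)] at h2
    linarith
  refine ldens_pos (A := A j) (L := 4 * K + 20) hc (fun b => ?_) hcA
  refine block_count (tm := tm j) (fun m hm => (htm j m hm).2) (hΘ b) (hsel b j) ?_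
  intro m hm n hgood hn hn1 hn2
  have hn1' : (2:ℤ) ^ b + K + 4 ≤ n := by exact_mod_cast hn1
  have hn2' : (n:ℤ) + K + 4 < 2 ^ (b + 1) := by exact_mod_cast hn2
  have hthn : th n = Θ b := hthb b n (by omega) (by omega)
  have hclose := (htm j m hm).1.2
  rw [hj] at hclose
  obtain ⟨hS, hT⟩ := visit_bound hp hpos hC hρC hf (phaseTol_pos j) (phaseTol_le j) hth01 z hK
    (by positivity) hclose (n := n) (by rw [hthn]; exact hgood) (by rw [hthn]; exact hn)
    (fun k hk => by
      rw [abs_le] at hk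
      rw [hthn]
      exact hthb b _ (by omega) (by omega))
  have hT' := hT.trans hη
  simp only [Set.mem_ofPred_eq]
  have hSS := (hS.add hzs).mul_left (2 ^ p)
  have hle : ∀ k : ℤ, |(∫ s in (((k + n : ℤ) : ℝ) + th (k + n))..
      (((k + n : ℤ) : ℝ) + th (k + n) + 1), f s) - y k| ^ p * ρ k ≤
      2 ^ p * (|(∫ s in (((k + n : ℤ) : ℝ) + th (k + n))..
      (((k + n : ℤ) : ℝ) + th (k + n) + 1), f s) - z k| ^ p * ρ k +
        |(z k : ℝ) - y k| ^ p * ρ k) := by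
    intro k
    rw [← add_mul, ← mul_assoc]
    exact mul_le_mul_of_nonneg_right (abs_sub_rpow_le hp _ _ _) (hpos _).le
  have hnn : ∀ k : ℤ, 0 ≤ |(∫ s in (((k + n : ℤ) : ℝ) + th (k + n))..
      (((k + n : ℤ) : ℝ) + th (k + n) + 1), f s) - y k| ^ p * ρ k := fun k => by
    have := hpos k; positivity
  refine ((Summable.of_nonneg_of_le hnn hle hSS).tsum_le_tsum hle hSS).trans ?_
  rw [tsum_mul_left, hS.tsum_add hzs]
  calc _ ≤ (2:ℝ) ^ p * (κ + κ) := by gcongr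
    _ = ε ^ p := by rw [hκ]; field_simp; ring
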